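/- arXiv:2208.09627 — 3 statements merged into one kernel-verified Lean document; each statement's English description precedes it below -/
import Mathlib

section
/- Let θ and Z be independent real random variables, where θ is uniformly distributed on [−π, π] and Z has probability density f(z) = (2π − |z|)/(4π²) on [−2π, 2π] (and 0 elsewhere). Then P(cos(Z − θ) ≥ 0) = 1/2; that is, the probability that the wrapped phase of Z lies within the half-circle of angular width π centered at the wrapped phase of θ equals 1/2. -/
open MeasureTheory ProbabilityTheory Real Set

/-- The function `cos (z - ·)` is nonnegative on exactly half of the period `(-π, π]`. -/
theorem volume_setOf_cos_sub_nonneg_inter_Ioc (z : ℝ) :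
    volume ({t : ℝ | 0 ≤ Real.cos (z - t)} ∩ Ioc (-π) π) = ENNReal.ofReal π := by
  have hfd := isAddFundamentalDomain_Ioc Real.two_pi_pos
  have hmeas : MeasurableSet {t : ℝ | 0 ≤ Real.cos (z - t)} :=
    measurableSet_le measurable_const (by fun_prop)
  have hinv : ∀ g : AddSubgroup.zmultiples (2 * π),
      (fun t => g +ᵥ t) ⁻¹' {t : ℝ | 0 ≤ Real.cos (z - t)} = {t : ℝ | 0 ≤ Real.cos (z - t)} := by
    rintro ⟨_, n, rfl⟩
    ext t
    have h : z - (n • (2 * π) + t) = z - t - n * (2 * π) := by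
      rw [zsmul_eq_mul]; ring
    simp only [mem_preimage, mem_ofPred_eq, AddSubgroup.vadd_def, vadd_eq_add, h,
      Real.cos_sub_int_mul_two_pi]
  have hwindow := (hfd (-π)).measure_set_eq (hfd (z - π)) hmeas hinv
  have hIcc : {t : ℝ | 0 ≤ Real.cos (z - t)} ∩ Ioc (z - π) (z - π + 2 * π)
      = Icc (z - π / 2) (z + π / 2) := by
    ext t
    simp only [mem_inter_iff, mem_ofPred_eq, mem_Ioc, mem_Icc]
    have hπ := Real.pi_pos
    constructor
    · rintro ⟨hcos, hlo, hhi⟩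
      constructor
      · by_contra! hlt
        linarith [Real.cos_neg_of_pi_div_two_lt_of_lt (x := z - t) (by linarith) (by linarith)]
      · by_contra! hlt
        rw [← Real.cos_neg] at hcos
        linarith [Real.cos_neg_of_pi_div_two_lt_of_lt (x := -(z - t)) (by linarith) (by linarith)]
    · rintro ⟨hlo, hhi⟩
      exact ⟨Real.cos_nonneg_of_mem_Icc ⟨by linarith, by linarith⟩, by linarith, by linarith⟩
  rw [hIcc, Real.volume_Icc] at hwindow
  convert hwindow using 3 <;> ring_nf

/-- If `θ` is uniform on `[-π, π]`, `Z` has the triangular density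
`(2π - |z|)/(4π²)` on `[-2π, 2π]`, and `θ`, `Z` are independent, then
`P(cos (Z - θ) ≥ 0) = 1/2` (the asymptotic activation probability). -/
theorem activation_probability_eq_half
    {Ω : Type*} [MeasureSpace Ω] [IsProbabilityMeasure (ℙ : Measure Ω)]
    (θ Z : Ω → ℝ) (hmθ : Measurable θ) (hmZ : Measurable Z)
    (hindep : IndepFun θ Z ℙ)
    (hθ : (ℙ : Measure Ω).map θ
        = (ENNReal.ofReal (2 * π))⁻¹ • (volume.restrict (Icc (-π) π)))
    (hZ : (ℙ : Measure Ω).map Z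
        = volume.withDensity
            (fun z => ENNReal.ofReal
              (indicator (Icc (-(2 * π)) (2 * π)) (fun z => (2 * π - |z|) / (4 * π ^ 2)) z))) :
    ℙ {ω | 0 ≤ Real.cos (Z ω - θ ω)} = 1 / 2 := by
  have hmeas : MeasurableSet {p : ℝ × ℝ | 0 ≤ Real.cos (p.2 - p.1)} :=
    measurableSet_le measurable_const (by fun_prop)
  have hjoint := (indepFun_iff_map_prod_eq_prod_map_map hmθ.aemeasurable hmZ.aemeasurable).1 hindep
  have := Measure.isProbabilityMeasure_map (μ := (ℙ : Measure Ω)) hmθ.aemeasurable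
  have := Measure.isProbabilityMeasure_map (μ := (ℙ : Measure Ω)) hmZ.aemeasurable
  have hslice : ∀ z : ℝ, (ℙ : Measure Ω).map θ {t | 0 ≤ Real.cos (z - t)} = 1 / 2 := by
    intro z
    rw [hθ, Measure.smul_apply, ← Measure.restrict_congr_set Ioc_ae_eq_Icc,
      Measure.restrict_apply (measurableSet_le measurable_const (by fun_prop)),
      volume_setOf_cos_sub_nonneg_inter_Ioc, smul_eq_mul, mul_comm, ← div_eq_mul_inv,
      ← ENNReal.ofReal_div_of_pos Real.two_pi_pos, div_mul_cancel_right₀ Real.pi_ne_zero,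
      ENNReal.ofReal_inv_of_pos two_pos]
    simp
  calc ℙ {ω | 0 ≤ Real.cos (Z ω - θ ω)}
      = (ℙ : Measure Ω).map (fun ω => (θ ω, Z ω)) {p | 0 ≤ Real.cos (p.2 - p.1)} :=
        (Measure.map_apply (hmθ.prodMk hmZ) hmeas).symm
    _ = ∫⁻ z, (ℙ : Measure Ω).map θ {t | 0 ≤ Real.cos (z - t)} ∂(ℙ : Measure Ω).map Z := by
        rw [hjoint, Measure.prod_apply_symm hmeas]; rfl
    _ = 1 / 2 := by simp only [hslice, lintegral_const, measure_univ, mul_one]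
end

section
/- Let θ and Z be independent real random variables, where θ is uniformly distributed on [−π, π] and Z has probability density f(z) = (2π − |z|)/(4π²) on [−2π, 2π] (and 0 elsewhere). Then P(cos(Z − θ) ≥ 0 and |θ| ≤ π/2) = 1/4. -/
open MeasureTheory ProbabilityTheory Real Set

/-- The triangular density on `[-2π, 2π]`. -/
noncomputable def triangularDensity (z : ℝ) : ENNReal :=
  ENNReal.ofReal
    (indicator (Icc (-(2 * π)) (2 * π)) (fun z => (2 * π - |z|) / (4 * π ^ 2)) z)

lemma measurable_triangularDensity : Measurable triangularDensity := by
  unfold triangularDensity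
  refine ENNReal.measurable_ofReal.comp (Measurable.indicator ?_ measurableSet_Icc)
  fun_prop

/-- Wrapping the triangular density modulo `2π` gives the uniform density. -/
lemma triangularDensity_add_triangularDensity_sub {z : ℝ} (hz : z ∈ Ioc 0 (2 * π)) :
    triangularDensity z + triangularDensity (z - 2 * π) = ENNReal.ofReal (2 * π)⁻¹ := by
  obtain ⟨h0, h1⟩ := hz
  have hpi := pi_pos
  have hz1 : z ∈ Icc (-(2 * π)) (2 * π) := ⟨by linarith, h1⟩
  have hz2 : z - 2 * π ∈ Icc (-(2 * π)) (2 * π) := ⟨by linarith, by linarith⟩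
  unfold triangularDensity
  rw [indicator_of_mem hz1, indicator_of_mem hz2, abs_of_pos h0,
    abs_of_nonpos (by linarith : z - 2 * π ≤ 0), ← ENNReal.ofReal_add]
  · congr 1
    field_simp
    ring
  · exact div_nonneg (by linarith) (by positivity)
  · exact div_nonneg (by linarith) (by positivity)

lemma support_triangularDensity_subset :
    Function.support triangularDensity ⊆ Ioc (-(2 * π)) (2 * π) := by
  intro z hz
  by_contra hnot
  apply hz
  unfold triangularDensity
  by_cases hm : z ∈ Icc (-(2 * π)) (2 * π)
  · have hzeq : z = -(2 * π) := by
      by_contra hne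
      exact hnot ⟨lt_of_le_of_ne hm.1 (Ne.symm hne), hm.2⟩
    rw [indicator_of_mem hm, hzeq, abs_neg, abs_of_pos two_pi_pos]
    simp
  · rw [indicator_of_notMem hm, ENNReal.ofReal_zero]

/-- The triangular law gives a `2π`-periodic set its normalized length over one period. -/
lemma withDensity_triangularDensity_apply_of_periodic {s : Set ℝ} (hs : MeasurableSet s)
    (hper : ∀ z, z - 2 * π ∈ s ↔ z ∈ s) :
    volume.withDensity triangularDensity s
      = ENNReal.ofReal (2 * π)⁻¹ * volume (s ∩ Ioc 0 (2 * π)) := by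
  have hpi := two_pi_pos
  have hm := measurable_triangularDensity
  have hshift : ∫⁻ z in Ioc (-(2 * π)) 0, s.indicator triangularDensity z
      = ∫⁻ z in Ioc 0 (2 * π), s.indicator (fun z => triangularDensity (z - 2 * π)) z := by
    rw [← lintegral_indicator measurableSet_Ioc, ← lintegral_indicator measurableSet_Ioc,
      ← lintegral_sub_right_eq_self _ (2 * π)]
    refine lintegral_congr fun z => ?_
    have hmem : z - 2 * π ∈ Ioc (-(2 * π)) 0 ↔ z ∈ Ioc 0 (2 * π) := by
      constructor <;> rintro ⟨h1, h2⟩ <;> constructor <;> linarith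
    have hz := hper z
    simp only [indicator]
    split_ifs <;> first | rfl | tauto
  have hsupp : Function.support (s.indicator triangularDensity) ⊆ Ioc (-(2 * π)) (2 * π) :=
    by
    rw [support_indicator]
    exact inter_subset_right.trans support_triangularDensity_subset
  rw [withDensity_apply _ hs, ← lintegral_indicator hs,
    ← setLIntegral_eq_of_support_subset hsupp,
    ← Ioc_union_Ioc_eq_Ioc (by linarith : -(2 * π) ≤ 0) hpi.le,
    lintegral_union measurableSet_Ioc (Ioc_disjoint_Ioc_of_le le_rfl), hshift,
    ← lintegral_add_right _ (hm.indicator hs)]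
  calc _ = ∫⁻ z in Ioc 0 (2 * π), s.indicator (fun _ => ENNReal.ofReal (2 * π)⁻¹) z := by
        refine setLIntegral_congr_fun measurableSet_Ioc fun z hz => ?_
        by_cases hzs : z ∈ s
        · simp only [indicator_of_mem hzs]
          rw [add_comm, triangularDensity_add_triangularDensity_sub hz]
        · simp only [indicator_of_notMem hzs, add_zero]
    _ = _ := by
        rw [lintegral_indicator_const hs, Measure.restrict_apply hs]

/-- A shifted cosine is nonnegative on half of a period. -/
lemma volume_cos_sub_nonneg_inter_Ioc (t : ℝ) :
    volume ({z | 0 ≤ cos (z - t)} ∩ Ioc 0 (2 * π)) = ENNReal.ofReal π := by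
  have hpi := pi_pos
  have hs : MeasurableSet {z | 0 ≤ cos (z - t)} :=
    measurableSet_le measurable_const (by fun_prop)
  have hdom (a : ℝ) := isAddFundamentalDomain_Ioc two_pi_pos a volume
  have hinv : ∀ g : AddSubgroup.zmultiples (2 * π),
      (fun x => g +ᵥ x) ⁻¹' {z | 0 ≤ cos (z - t)} = {z | 0 ≤ cos (z - t)} := by
    rintro ⟨_, n, rfl⟩
    ext z
    have h : n • (2 * π) + z - t = z - t + n * (2 * π) := by
      rw [zsmul_eq_mul]; ring
    change 0 ≤ cos (n • (2 * π) + z - t) ↔ 0 ≤ cos (z - t)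
    rw [h, cos_add_int_mul_two_pi]
  have hmove := (hdom 0).measure_set_eq (hdom (t - π)) hs hinv
  rw [zero_add] at hmove
  rw [hmove]
  have hset : {z | 0 ≤ cos (z - t)} ∩ Ioc (t - π) (t - π + 2 * π)
      = Icc (t - π / 2) (t + π / 2) := by
    ext z
    constructor
    · rintro ⟨hc, h1, h2⟩
      by_contra hnot
      rw [mem_ofPred_eq] at hc
      refine absurd hc (not_le.mpr ?_)
      rcases not_and_or.mp hnot with h | h
      · rw [← cos_neg]
        exact cos_neg_of_pi_div_two_lt_of_lt (by linarith) (by linarith)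
      · exact cos_neg_of_pi_div_two_lt_of_lt (by linarith) (by linarith)
    · rintro ⟨h1, h2⟩
      exact ⟨cos_nonneg_of_neg_pi_div_two_le_of_le (by linarith) (by linarith),
        by linarith, by linarith⟩
  rw [hset, volume_Icc]
  congr 1
  ring

lemma withDensity_triangularDensity_cos_sub_nonneg (t : ℝ) :
    volume.withDensity triangularDensity {z | 0 ≤ cos (z - t)} = 2⁻¹ := by
  have hpi := pi_pos
  rw [withDensity_triangularDensity_apply_of_periodic
    (measurableSet_le measurable_const (by fun_prop)), volume_cos_sub_nonneg_inter_Ioc,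
    ← ENNReal.ofReal_mul (by positivity)]
  · rw [show (2 * π)⁻¹ * π = 2⁻¹ by field_simp, ENNReal.ofReal_inv_of_pos two_pos,
      ENNReal.ofReal_ofNat]
  · intro z
    rw [mem_ofPred_eq, sub_right_comm, cos_sub_two_pi, mem_ofPred_eq]

lemma uniform_abs_le_pi_div_two :
    ((ENNReal.ofReal (2 * π))⁻¹ • volume.restrict (Icc (-π) π)) {t | |t| ≤ π / 2} = 2⁻¹ := by
  have hpi := pi_pos
  have hset : {t : ℝ | |t| ≤ π / 2} ∩ Icc (-π) π = Icc (-(π / 2)) (π / 2) := by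
    ext t
    simp only [mem_inter_iff, mem_ofPred_eq, abs_le, mem_Icc]
    constructor
    · exact fun h => h.1
    · exact fun h => ⟨h, by linarith, by linarith⟩
  rw [Measure.smul_apply, Measure.restrict_apply (measurableSet_le (by fun_prop) (by fun_prop)),
    hset, volume_Icc, smul_eq_mul, ← ENNReal.ofReal_inv_of_pos two_pi_pos,
    ← ENNReal.ofReal_mul (by positivity),
    show (2 * π)⁻¹ * (π / 2 - -(π / 2)) = 2⁻¹ by field_simp; norm_num,
    ENNReal.ofReal_inv_of_pos two_pos, ENNReal.ofReal_ofNat]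

/-- With `θ` uniform on `[-π, π]` and `Z` triangular on `[-2π, 2π]`,
independent, the probability of the event `cos (Z - θ) ≥ 0 ∧ |θ| ≤ π/2` equals `1/4`
(the case probability `P_{Π(c₁) ≥ Π(c₂)}` in Appendix B). -/
theorem activation_case_probability_eq_quarter
    {Ω : Type*} [MeasureSpace Ω] [IsProbabilityMeasure (ℙ : Measure Ω)]
    (θ Z : Ω → ℝ) (hmθ : Measurable θ) (hmZ : Measurable Z)
    (hindep : IndepFun θ Z ℙ)
    (hθ : (ℙ : Measure Ω).map θ
        = (ENNReal.ofReal (2 * π))⁻¹ • (volume.restrict (Icc (-π) π)))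
    (hZ : (ℙ : Measure Ω).map Z
        = volume.withDensity
            (fun z => ENNReal.ofReal
              (indicator (Icc (-(2 * π)) (2 * π)) (fun z => (2 * π - |z|) / (4 * π ^ 2)) z))) :
    ℙ {ω | 0 ≤ Real.cos (Z ω - θ ω) ∧ |θ ω| ≤ π / 2} = 1 / 4 := by
  change _ = volume.withDensity triangularDensity at hZ
  have hA : MeasurableSet {t : ℝ | |t| ≤ π / 2} :=
    measurableSet_le (by fun_prop) (by fun_prop)
  have hE : MeasurableSet {p : ℝ × ℝ | 0 ≤ cos (p.2 - p.1) ∧ |p.1| ≤ π / 2} := by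
    rw [ofPred_and]
    exact (measurableSet_le (by fun_prop) (by fun_prop)).inter
      (measurableSet_le (by fun_prop) (by fun_prop))
  have hslice (t : ℝ) :
      (ℙ : Measure Ω).map Z (Prod.mk t ⁻¹' {p : ℝ × ℝ | 0 ≤ cos (p.2 - p.1) ∧ |p.1| ≤ π / 2})
        = {t : ℝ | |t| ≤ π / 2}.indicator (fun _ => 2⁻¹) t := by
    by_cases ht : |t| ≤ π / 2
    · rw [indicator_of_mem (by exact ht), hZ,
        ← withDensity_triangularDensity_cos_sub_nonneg t]
      simp [ht]
    · rw [indicator_of_notMem (by exact ht)]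
      simp [ht]
  have : IsProbabilityMeasure ((ℙ : Measure Ω).map Z) :=
    Measure.isProbabilityMeasure_map hmZ.aemeasurable
  calc ℙ {ω | 0 ≤ Real.cos (Z ω - θ ω) ∧ |θ ω| ≤ π / 2}
      = (ℙ : Measure Ω).map (fun ω => (θ ω, Z ω))
          {p : ℝ × ℝ | 0 ≤ cos (p.2 - p.1) ∧ |p.1| ≤ π / 2} :=
        (Measure.map_apply (hmθ.prodMk hmZ) hE).symm
    _ = 2⁻¹ * 2⁻¹ := by
        rw [(indepFun_iff_map_prod_eq_prod_map_map hmθ.aemeasurable hmZ.aemeasurable).mp hindep,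
          Measure.prod_apply hE, lintegral_congr hslice, lintegral_indicator_const hA, hθ,
          uniform_abs_le_pi_div_two]
    _ = 1 / 4 := by
        rw [← ENNReal.mul_inv (by simp) (by simp), one_div]
        norm_num
end

section
/- Let X_1, …, X_N be pairwise independent random variables on a probability space, each taking values in {0, 1} with P(X_n = 1) = p for every n, where 0 < p < 1, and let S = Σ_{n=1}^N X_n. Let t be a positive integer with (N − 1)p ≤ t ≤ 1 + (N − 1)p. Then P(S ≥ t) ≤ ((N − 1)(1 − p) + t)·p / t; consequently P(S ≤ t) ≥ 1 − ((N − 1)(1 − p) + t)·p / t. -/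
open MeasureTheory ProbabilityTheory

/-- The expectation of a `{0, 1}`-valued random variable is its success probability. -/
lemma integral_eq_of_zero_or_one {Ω : Type*} [MeasurableSpace Ω] {μ : Measure Ω}
    {Y : Ω → ℝ} (hm : Measurable Y) (hval : ∀ ω, Y ω = 0 ∨ Y ω = 1) {p : ℝ} (hp0 : 0 ≤ p)
    (hp : μ {ω | Y ω = 1} = ENNReal.ofReal p) : ∫ ω, Y ω ∂μ = p := by
  have hY : Y = {ω | Y ω = 1}.indicator 1 := by
    funext ω
    rcases hval ω with h | h <;> simp [Set.indicator, h]
  have hs : MeasurableSet {ω | Y ω = 1} := hm (measurableSet_singleton 1)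
  rw [hY, integral_indicator_one hs, measureReal_def, hp, ENNReal.toReal_ofReal hp0]

/-- Tail bound for a sum `S` of pairwise independent Bernoulli(`p`)
random variables: for a positive integer threshold `t` with
`(N-1)p ≤ t ≤ 1 + (N-1)p`, one has `P(S ≥ t) ≤ ((N-1)(1-p) + t)·p/t`, hence
`P(S ≤ t) ≥ 1 − ((N-1)(1-p) + t)·p/t`. -/
theorem pairwise_independent_bernoulli_tail_bound
    {Ω : Type*} [MeasureSpace Ω] [IsProbabilityMeasure (ℙ : Measure Ω)]
    (N : ℕ) (X : Fin N → Ω → ℝ) (hmX : ∀ n, Measurable (X n))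
    (hpair : ∀ i j : Fin N, i ≠ j → IndepFun (X i) (X j) ℙ)
    (hval : ∀ n ω, X n ω = 0 ∨ X n ω = 1)
    (p : ℝ) (hp0 : 0 < p) (hp1 : p < 1)
    (hp : ∀ n, ℙ {ω | X n ω = 1} = ENNReal.ofReal p)
    (t : ℕ) (ht : 0 < t)
    (htlo : ((N : ℝ) - 1) * p ≤ t) (hthi : (t : ℝ) ≤ 1 + ((N : ℝ) - 1) * p) :
    ℙ {ω | (t : ℝ) ≤ ∑ n : Fin N, X n ω}
        ≤ ENNReal.ofReal ((((N : ℝ) - 1) * (1 - p) + t) * p / t) ∧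
    1 - ENNReal.ofReal ((((N : ℝ) - 1) * (1 - p) + t) * p / t)
        ≤ ℙ {ω | ∑ n : Fin N, X n ω ≤ t} := by
  have ht1 : (1 : ℝ) ≤ t := by exact_mod_cast ht
  have hN : (1 : ℝ) ≤ N := by
    rcases Nat.eq_zero_or_pos N with h | h
    · subst h; norm_num at hthi; linarith
    · exact_mod_cast h
  set S : Ω → ℝ := ∑ n, X n with hS
  have hSapp : ∀ ω, ∑ n, X n ω = S ω := fun ω => by simp [hS]
  simp only [hSapp]
  have hmS : Measurable S := by
    simp_rw [hS]; fun_prop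
  have hX01 : ∀ n ω, 0 ≤ X n ω ∧ X n ω ≤ 1 := fun n ω => by
    rcases hval n ω with h | h <;> simp [h]
  have hLp : ∀ n, MemLp (X n) 2 ℙ := fun n =>
    MemLp.of_bound (hmX n).aestronglyMeasurable 1 (ae_of_all _ fun ω => by
      rw [Real.norm_eq_abs, abs_of_nonneg (hX01 n ω).1]; exact (hX01 n ω).2)
  have hSLp : MemLp S 2 ℙ := memLp_finsetSum' _ fun n _ => hLp n
  have hSint : Integrable S ℙ := hSLp.integrable (by norm_num)
  have hS2int : Integrable (fun ω => S ω ^ 2) ℙ := hSLp.integrable_sq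
  have hS0 : ∀ ω, 0 ≤ S ω := fun ω => by
    rw [← hSapp]; exact Finset.sum_nonneg fun n _ => (hX01 n ω).1
  have hSN : ∀ ω, S ω ≤ N := fun ω => by
    rw [← hSapp]
    exact (Finset.sum_le_sum fun n _ => (hX01 n ω).2).trans (by simp)
  have hEX : ∀ n, ∫ ω, X n ω ∂ℙ = p := fun n =>
    integral_eq_of_zero_or_one (hmX n) (hval n) hp0.le (hp n)
  have hES : ∫ ω, S ω ∂ℙ = N * p := by
    simp_rw [← hSapp]
    rw [integral_finsetSum _ fun n _ => (hLp n).integrable (by norm_num)]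
    simp [hEX]
  have hVX : ∀ n, variance (X n) ℙ = p - p ^ 2 := fun n => by
    have hsq : X n ^ 2 = X n := by
      funext ω
      rcases hval n ω with h | h <;> simp [h]
    rw [variance_eq_sub (hLp n), hsq, hEX]
  have hVS : variance S ℙ = N * (p - p ^ 2) := by
    rw [hS, IndepFun.variance_sum (fun n _ => hLp n) fun i _ j _ hij => hpair i j hij]
    simp [hVX, mul_sub]
  have hES2 : ∫ ω, S ω ^ 2 ∂ℙ = N * (p - p ^ 2) + (N * p) ^ 2 := by
    have h := variance_eq_sub hSLp
    rw [hVS, hES] at h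
    simp only [Pi.pow_apply] at h
    linarith
  -- The concave quadratic `s ↦ s (N + t - s) / (t N)` dominates the indicator of `t ≤ s`
  -- on `[0, N]`.
  have hq0 : ∀ ω, 0 ≤ (N + t) * S ω - S ω ^ 2 := fun ω => by
    nlinarith [hS0 ω, hSN ω, mul_nonneg (hS0 ω) (sub_nonneg.2 (hSN ω))]
  have hsub : {ω | (t : ℝ) ≤ S ω} ⊆ {ω | (t : ℝ) * N ≤ (N + t) * S ω - S ω ^ 2} := by
    intro ω hω
    have h : (t : ℝ) ≤ S ω := hω
    change (t : ℝ) * N ≤ (N + t) * S ω - S ω ^ 2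
    nlinarith [mul_nonneg (sub_nonneg.2 h) (sub_nonneg.2 (hSN ω))]
  have hmarkov := mul_meas_ge_le_integral_of_nonneg (μ := (ℙ : Measure Ω)) (ae_of_all _ hq0)
    ((hSint.const_mul (N + t : ℝ)).sub hS2int) ((t : ℝ) * N)
  rw [integral_sub (hSint.const_mul _) hS2int, integral_const_mul, hES, hES2] at hmarkov
  have htail : ℙ {ω | (t : ℝ) ≤ S ω}
      ≤ ENNReal.ofReal ((((N : ℝ) - 1) * (1 - p) + t) * p / t) := by
    refine (measure_mono hsub).trans ?_
    rw [← ofReal_measureReal]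
    refine ENNReal.ofReal_le_ofReal ?_
    rw [le_div_iff₀ (by linarith)]
    refine le_of_mul_le_mul_left ?_ (show (0 : ℝ) < N by linarith)
    linarith
  refine ⟨htail, (tsub_le_tsub_left htail 1).trans ?_⟩
  rw [← prob_compl_eq_one_sub (measurableSet_le measurable_const hmS)]
  exact measure_mono fun ω hω => (not_le.1 (show ¬ (t : ℝ) ≤ S ω from hω)).le
end
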